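/- Let Ω ⊂ ℝⁿ be a bounded domain and u ∈ L¹(Ω). For every ε > 0 and every γ > 0 there exists δ > 0 such that for every finite measurable partition 𝒫 = (P_j)_{j=1}^m of Ω into pairwise disjoint measurable sets of positive Lebesgue measure with ν(𝒫) = max_j diam(P_j) < δ, the piecewise-average function u_𝒫 satisfies |{x ∈ Ω : |u_𝒫(x) − u(x)| > ε}| < γ. In other words, u_𝒫 converges to u in Lebesgue measure as the norm of the partition tends to 0. -/

import Mathlib

open MeasureTheory Filter Topology
open scoped ENNReal NNReal

/-!
A Lipschitz function barely oscillates on a piece of small diameter, so there it is uniformly close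
to its average. An integrable `u` is `L¹`-close to a Lipschitz `g`, because Lipschitz functions are
dense in `L¹` of a finite measure. Averaging contracts the `L¹` norm, hence replacing `u` by `g`
costs at most `2 ‖u - g‖₁`, and `u_𝒫 → u` in `L¹(Ω)`. Chebyshev's inequality then gives convergence
in measure.
-/

section Average

variable {X E : Type*} [MeasurableSpace X] [NormedAddCommGroup E] [NormedSpace ℝ E]
  [CompleteSpace E] {μ : Measure X} {u g : X → E} {r : ℝ≥0∞}

lemma enorm_average_sub_le_laverage [IsFiniteMeasure μ] [NeZero μ] (hu : Integrable u μ) (c : E) :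
    ‖(⨍ y, u y ∂μ) - c‖ₑ ≤ ⨍⁻ y, ‖u y - c‖ₑ ∂μ := by
  have average_sub : (⨍ y, u y ∂μ) - c = ⨍ y, (u y - c) ∂μ := by
    conv_lhs => rw [← average_const μ c]
    exact (integral_sub hu.to_average (integrable_const c)).symm
  rw [average_sub]
  exact enorm_integral_le_lintegral_enorm _

lemma lintegral_enorm_average_sub_le [IsFiniteMeasure μ] (hu : Integrable u μ)
    (hr : ∀ᵐ x ∂μ, ∀ᵐ y ∂μ, ‖g y - g x‖ₑ ≤ r) :
    ∫⁻ x, ‖(⨍ y, u y ∂μ) - u x‖ₑ ∂μ ≤ 2 * ∫⁻ x, ‖u x - g x‖ₑ ∂μ + r * μ Set.univ := by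
  rcases eq_zero_or_neZero μ with rfl | _
  · simp
  have triangle (x y : X) : ‖u y - u x‖ₑ ≤ ‖u y - g y‖ₑ + ‖g y - g x‖ₑ + ‖u x - g x‖ₑ := by
    rw [enorm_sub_rev (u x)]
    simpa only [edist_eq_enorm_sub] using edist_triangle4 (u y) (g y) (g x) (u x)
  have average_bound : ∀ᵐ x ∂μ,
      ‖(⨍ y, u y ∂μ) - u x‖ₑ ≤ (⨍⁻ y, ‖u y - g y‖ₑ ∂μ) + (r + ‖u x - g x‖ₑ) := by
    filter_upwards [hr] with x hx
    calc ‖(⨍ y, u y ∂μ) - u x‖ₑ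
        ≤ ⨍⁻ y, ‖u y - u x‖ₑ ∂μ := enorm_average_sub_le_laverage hu (u x)
      _ ≤ ⨍⁻ y, (‖u y - g y‖ₑ + (r + ‖u x - g x‖ₑ)) ∂μ := by
          refine laverage_mono_ae ?_
          filter_upwards [hx] with y hy
          rw [← add_assoc]
          exact (triangle x y).trans (by gcongr)
      _ = (⨍⁻ y, ‖u y - g y‖ₑ ∂μ) + (r + ‖u x - g x‖ₑ) := by
          rw [laverage, lintegral_add_right _ measurable_const]
          exact congrArg _ (laverage_const μ _)
  calc ∫⁻ x, ‖(⨍ y, u y ∂μ) - u x‖ₑ ∂μ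
      ≤ ∫⁻ x, ((⨍⁻ y, ‖u y - g y‖ₑ ∂μ) + (r + ‖u x - g x‖ₑ)) ∂μ := lintegral_mono_ae average_bound
    _ = 2 * ∫⁻ x, ‖u x - g x‖ₑ ∂μ + r * μ Set.univ := by
        rw [lintegral_add_left measurable_const, lintegral_laverage,
          lintegral_add_left measurable_const, lintegral_const]
        ring

end Average

section LipschitzDense

variable {X E : Type*} [PseudoEMetricSpace X] [NormedAddCommGroup E] [NormedSpace ℝ E]
  {s F : Set X} {r : ℝ}

lemma norm_thickenedIndicator_smul_le (hr : 0 < r) (F : Set X) (c : E) (x : X) :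
    ‖(thickenedIndicator hr F x : ℝ) • c‖ ≤ ‖c‖ := by
  rw [norm_smul, NNReal.norm_eq]
  exact mul_le_of_le_one_left (norm_nonneg c) (thickenedIndicator_le_one hr F x)

lemma norm_thickenedIndicator_smul_sub_indicator_le (hr : 0 < r) (hFs : F ⊆ s) (c : E) (x : X) :
    ‖(thickenedIndicator hr F x : ℝ) • c - s.indicator (fun _ ↦ c) x‖ ≤
      ‖((s ∪ Metric.thickening r F) \ F).indicator (fun _ ↦ c) x‖ := by
  by_cases hxF : x ∈ F
  · simp [thickenedIndicator_one hr F hxF, hFs hxF]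
  by_cases hxs : x ∈ s
  · have le_one : (thickenedIndicator hr F x : ℝ) ≤ 1 := thickenedIndicator_le_one hr F x
    have norm_sub_one_smul_le : ‖((thickenedIndicator hr F x : ℝ) - 1) • c‖ ≤ ‖c‖ := by
      rw [norm_smul, Real.norm_of_nonpos (sub_nonpos.2 le_one)]
      exact mul_le_of_le_one_left (norm_nonneg c) (by simp)
    simpa [hxs, hxF, sub_smul] using norm_sub_one_smul_le
  by_cases hxr : x ∈ Metric.thickening r F
  · simpa [hxs, hxF, hxr] using norm_thickenedIndicator_smul_le hr F c x
  · simp [thickenedIndicator_zero hr F hxr, hxs]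

variable [MeasurableSpace X] [BorelSpace X] {μ : Measure X} [IsFiniteMeasure μ] {p ε : ℝ≥0∞}

lemma exists_subset_measure_union_thickening_sdiff_le (hs : MeasurableSet s) (hε : ε ≠ 0) :
    ∃ F ⊆ s, ∃ r > 0, μ ((s ∪ Metric.thickening r F) \ F) ≤ ε := by
  obtain ⟨F, hFs, hF, hsF⟩ := hs.exists_isClosed_sdiff_lt
    (measure_ne_top μ s) (ENNReal.half_pos hε).ne'
  have thickening_tendsto : Tendsto (fun r ↦ μ (Metric.thickening r F)) (𝓝[>] 0) (𝓝 (μ F)) :=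
    tendsto_measure_thickening_of_isClosed ⟨1, one_pos, measure_ne_top μ _⟩ hF
  have measure_lt : μ F < μ F + ε / 2 :=
    ENNReal.lt_add_right (measure_ne_top μ F) (ENNReal.half_pos hε).ne'
  obtain ⟨r, hr, hr_pos⟩ :=
    ((thickening_tendsto.eventually_lt_const measure_lt).and self_mem_nhdsWithin).exists
  refine ⟨F, hFs, r, hr_pos, ?_⟩
  have hrF : μ (Metric.thickening r F \ F) < ε / 2 :=
    measure_sdiff_lt_of_lt_add hF.nullMeasurableSet (Metric.self_subset_thickening hr_pos F)
      (measure_ne_top μ F) hr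
  rw [Set.union_sdiff_distrib, ← ENNReal.add_halves ε]
  exact (measure_union_le _ _).trans (add_le_add hsF.le hrF.le)

lemma exists_lipschitzWith_eLpNorm_sub_indicator_le (hp : p ≠ ∞) (hs : MeasurableSet s) (c : E)
    (hε : ε ≠ 0) :
    ∃ g : X → E, eLpNorm (g - s.indicator fun _ ↦ c) p μ ≤ ε ∧
      (∃ K, LipschitzWith K g) ∧ MemLp g p μ := by
  obtain ⟨η, hη_pos, hη⟩ := exists_eLpNorm_indicator_le (μ := μ) hp c hε
  obtain ⟨F, hFs, r, hr, hF⟩ := exists_subset_measure_union_thickening_sdiff_le (μ := μ) hs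
    (ENNReal.coe_pos.2 hη_pos).ne'
  have lipschitz : LipschitzWith r.toNNReal⁻¹ (fun x ↦ (thickenedIndicator hr F x : ℝ)) :=
    lipschitzWith_thickenedIndicator hr F
  refine ⟨fun x ↦ (thickenedIndicator hr F x : ℝ) • c, ?_, ⟨‖c‖₊ * r.toNNReal⁻¹, ?_⟩, ?_⟩
  · exact (eLpNorm_mono (norm_thickenedIndicator_smul_sub_indicator_le hr hFs c)).trans (hη _ hF)
  · rw [← ContinuousLinearMap.nnnorm_toSpanSingleton (𝕜 := ℝ) c]
    exact (ContinuousLinearMap.toSpanSingleton ℝ c).lipschitz.comp lipschitz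
  · exact .of_bound (lipschitz.continuous.aestronglyMeasurable.smul_const c) ‖c‖
      (.of_forall (norm_thickenedIndicator_smul_le hr F c))

theorem exists_lipschitzWith_eLpNorm_sub_le (hp : p ≠ ∞) {f : X → E} (hf : MemLp f p μ)
    (hε : ε ≠ 0) :
    ∃ g : X → E, eLpNorm (f - g) p μ ≤ ε ∧ (∃ K, LipschitzWith K g) ∧ MemLp g p μ := by
  refine hf.induction_dense hp (fun g ↦ (∃ K, LipschitzWith K g) ∧ MemLp g p μ) ?_ ?_ ?_ hε
  · exact fun c s hs _ _ hε ↦ exists_lipschitzWith_eLpNorm_sub_indicator_le hp hs c hε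
  · rintro f g ⟨⟨K, hK⟩, hf⟩ ⟨⟨L, hL⟩, hg⟩
    exact ⟨⟨K + L, hK.add hL⟩, hf.add hg⟩
  · exact fun g hg ↦ hg.2.aestronglyMeasurable

end LipschitzDense

section PiecewiseAverage

variable {X E ι : Type*} [MeasurableSpace X] [NormedAddCommGroup E] [NormedSpace ℝ E]
  {μ : Measure X} {P : ι → Set X} {u g : X → E} {r : ℝ≥0∞}

/-- The piecewise average `u_𝒫` of `u` over a possibly infinite family `P` of sets, meant to be
pairwise disjoint, so that at most one term of the sum is nonzero at each point. It vanishes outside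
their union and on pieces of measure zero or infinity. -/
noncomputable def piecewiseAverage (μ : Measure X) (P : ι → Set X) (u : X → E) (x : X) : E :=
  ∑' j, (P j).indicator (fun _ ↦ ⨍ y in P j, u y ∂μ) x

lemma piecewiseAverage_of_mem (hdisj : Pairwise (Function.onFun Disjoint P)) {j : ι} {x : X}
    (hx : x ∈ P j) : piecewiseAverage μ P u x = ⨍ y in P j, u y ∂μ := by
  have eq_zero (i : ι) (hij : i ≠ j) : (P i).indicator (fun _ ↦ ⨍ y in P i, u y ∂μ) x = 0 :=
    Set.indicator_of_notMem (fun hi ↦ Set.disjoint_left.1 (hdisj hij) hi hx) _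
  rw [piecewiseAverage, tsum_eq_single j eq_zero, Set.indicator_of_mem hx]

variable [Countable ι]

lemma aestronglyMeasurable_piecewiseAverage (hmeas : ∀ j, MeasurableSet (P j))
    (hdisj : Pairwise (Function.onFun Disjoint P)) :
    AEStronglyMeasurable (piecewiseAverage μ P u) (μ.restrict (⋃ j, P j)) := by
  refine aestronglyMeasurable_iUnion_iff.2 fun j ↦
    (aestronglyMeasurable_const (b := ⨍ y in P j, u y ∂μ)).congr ?_
  exact ae_restrict_of_forall_mem (hmeas j) fun x hx ↦ (piecewiseAverage_of_mem hdisj hx).symm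

lemma lintegral_enorm_piecewiseAverage_sub_le [CompleteSpace E] (hmeas : ∀ j, MeasurableSet (P j))
    (hdisj : Pairwise (Function.onFun Disjoint P)) (hfin : ∀ j, μ (P j) ≠ ∞)
    (hu : IntegrableOn u (⋃ j, P j) μ)
    (hr : ∀ j, ∀ x ∈ P j, ∀ y ∈ P j, ‖g y - g x‖ₑ ≤ r) :
    ∫⁻ x in ⋃ j, P j, ‖piecewiseAverage μ P u x - u x‖ₑ ∂μ ≤
      2 * ∫⁻ x in ⋃ j, P j, ‖u x - g x‖ₑ ∂μ + r * μ (⋃ j, P j) := by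
  have piece_bound (j : ι) : ∫⁻ x in P j, ‖piecewiseAverage μ P u x - u x‖ₑ ∂μ ≤
      2 * ∫⁻ x in P j, ‖u x - g x‖ₑ ∂μ + r * μ (P j) := by
    have : Fact (μ (P j) < ∞) := ⟨(hfin j).lt_top⟩
    have ae_osc : ∀ᵐ x ∂μ.restrict (P j), ∀ᵐ y ∂μ.restrict (P j), ‖g y - g x‖ₑ ≤ r :=
      ae_restrict_of_forall_mem (hmeas j) fun x hx ↦ ae_restrict_of_forall_mem (hmeas j) (hr j x hx)
    calc ∫⁻ x in P j, ‖piecewiseAverage μ P u x - u x‖ₑ ∂μ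
        = ∫⁻ x in P j, ‖(⨍ y in P j, u y ∂μ) - u x‖ₑ ∂μ :=
          setLIntegral_congr_fun (hmeas j) fun x hx ↦ by rw [piecewiseAverage_of_mem hdisj hx]
      _ ≤ 2 * ∫⁻ x in P j, ‖u x - g x‖ₑ ∂μ + r * μ (P j) := by
          simpa only [Measure.restrict_apply_univ] using lintegral_enorm_average_sub_le
            (hu.mono_set (Set.subset_iUnion P j)) ae_osc
  calc ∫⁻ x in ⋃ j, P j, ‖piecewiseAverage μ P u x - u x‖ₑ ∂μ
      = ∑' j, ∫⁻ x in P j, ‖piecewiseAverage μ P u x - u x‖ₑ ∂μ := lintegral_iUnion hmeas hdisj _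
    _ ≤ ∑' j, (2 * ∫⁻ x in P j, ‖u x - g x‖ₑ ∂μ + r * μ (P j)) := ENNReal.tsum_le_tsum piece_bound
    _ = 2 * ∫⁻ x in ⋃ j, P j, ‖u x - g x‖ₑ ∂μ + r * μ (⋃ j, P j) := by
        rw [ENNReal.tsum_add, ENNReal.tsum_mul_left, ENNReal.tsum_mul_left,
          lintegral_iUnion hmeas hdisj, measure_iUnion hdisj hmeas]

end PiecewiseAverage

section Convergence

variable {X E : Type*} [PseudoEMetricSpace X] [MeasurableSpace X] [BorelSpace X]
  [NormedAddCommGroup E] [NormedSpace ℝ E] [CompleteSpace E] {μ : Measure X} {Ω : Set X} {u : X → E}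

theorem exists_pos_lintegral_enorm_piecewiseAverage_sub_le (hΩ : μ Ω ≠ ∞) (hu : IntegrableOn u Ω μ)
    {η : ℝ≥0∞} (hη : η ≠ 0) :
    ∃ δ > 0, ∀ {ι : Type*} [Countable ι] {P : ι → Set X}, (∀ j, MeasurableSet (P j)) →
      Pairwise (Function.onFun Disjoint P) → (⋃ j, P j) = Ω →
      (∀ j, Metric.ediam (P j) < ENNReal.ofReal δ) →
      ∫⁻ x in Ω, ‖piecewiseAverage μ P u x - u x‖ₑ ∂μ ≤ η := by
  have : Fact (μ Ω < ∞) := ⟨hΩ.lt_top⟩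
  obtain ⟨g, hug, ⟨K, hK⟩, -⟩ := exists_lipschitzWith_eLpNorm_sub_le (ε := η / 2 / 2)
    ENNReal.one_ne_top (memLp_one_iff_integrable.2 hu) (by simp [hη])
  simp only [eLpNorm_one_eq_lintegral_enorm, Pi.sub_apply] at hug
  obtain ⟨δ', hδ', hgδ⟩ := EMetric.uniformContinuous_iff.1 hK.uniformContinuous (η / 2 / μ Ω)
    (ENNReal.div_pos (by simp [hη]) hΩ)
  obtain ⟨δ, -, hδ, hδδ'⟩ := ENNReal.lt_iff_exists_real_btwn.1 hδ'
  refine ⟨δ, ENNReal.ofReal_pos.1 hδ, fun {ι} _ {P} hmeas hdisj hP hdiam ↦ ?_⟩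
  subst hP
  have osc (j : ι) (x : X) (hx : x ∈ P j) (y : X) (hy : y ∈ P j) :
      ‖g y - g x‖ₑ ≤ η / 2 / μ (⋃ j, P j) := by
    rw [← edist_eq_enorm_sub]
    exact (hgδ ((Metric.edist_le_ediam_of_mem hy hx).trans_lt ((hdiam j).trans hδδ'))).le
  calc ∫⁻ x in ⋃ j, P j, ‖piecewiseAverage μ P u x - u x‖ₑ ∂μ
      ≤ 2 * ∫⁻ x in ⋃ j, P j, ‖u x - g x‖ₑ ∂μ + η / 2 / μ (⋃ j, P j) * μ (⋃ j, P j) :=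
        lintegral_enorm_piecewiseAverage_sub_le hmeas hdisj
          (fun j ↦ measure_ne_top_of_subset (Set.subset_iUnion P j) hΩ) hu osc
    _ ≤ 2 * (η / 2 / 2) + η / 2 := by gcongr; rw [mul_comm]; exact ENNReal.mul_div_le
    _ = η := by
        rw [ENNReal.mul_div_cancel two_ne_zero ENNReal.ofNat_ne_top, ENNReal.add_halves]

theorem measure_piecewiseAverage_dist_lt_of_partition_norm_small_general (hΩ : μ Ω ≠ ∞)
    (hu : IntegrableOn u Ω μ) {ε : ℝ} {γ : ℝ≥0∞} (hε : 0 < ε) (hγ : γ ≠ 0) :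
    ∃ δ > 0, ∀ {ι : Type*} [Countable ι] {P : ι → Set X}, (∀ j, MeasurableSet (P j)) →
      Pairwise (Function.onFun Disjoint P) → (⋃ j, P j) = Ω →
      (∀ j, Metric.ediam (P j) < ENNReal.ofReal δ) →
      μ {x ∈ Ω | ε < ‖piecewiseAverage μ P u x - u x‖} < γ := by
  obtain ⟨γ', hγ'_pos, hγ'⟩ := exists_between (pos_iff_ne_zero.2 hγ)
  have ofReal_ε_ne_zero : ENNReal.ofReal ε ≠ 0 := (ENNReal.ofReal_pos.2 hε).ne'
  obtain ⟨δ, hδ, hL1⟩ := exists_pos_lintegral_enorm_piecewiseAverage_sub_le hΩ hu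
    (mul_ne_zero hγ'_pos.ne' ofReal_ε_ne_zero)
  refine ⟨δ, hδ, fun {ι} _ {P} hmeas hdisj hP hdiam ↦ ?_⟩
  have aemeasurable : AEMeasurable (fun x ↦ ‖piecewiseAverage μ P u x - u x‖ₑ) (μ.restrict Ω) :=
    ((hP ▸ aestronglyMeasurable_piecewiseAverage hmeas hdisj).sub hu.aestronglyMeasurable).enorm
  calc μ {x ∈ Ω | ε < ‖piecewiseAverage μ P u x - u x‖}
      ≤ μ ({x | ENNReal.ofReal ε ≤ ‖piecewiseAverage μ P u x - u x‖ₑ} ∩ Ω) := by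
        refine measure_mono fun x hx ↦ ⟨?_, hx.1⟩
        simpa only [Set.mem_ofPred_eq, ofReal_norm] using ENNReal.ofReal_le_ofReal hx.2.le
    _ ≤ μ.restrict Ω {x | ENNReal.ofReal ε ≤ ‖piecewiseAverage μ P u x - u x‖ₑ} :=
        Measure.le_restrict_apply _ _
    _ ≤ (∫⁻ x in Ω, ‖piecewiseAverage μ P u x - u x‖ₑ ∂μ) / ENNReal.ofReal ε :=
        meas_ge_le_lintegral_div aemeasurable ofReal_ε_ne_zero ENNReal.ofReal_ne_top
    _ ≤ γ' := ENNReal.div_le_of_le_mul (hL1 hmeas hdisj hP hdiam)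
    _ < γ := hγ'

end Convergence

/-- Let `Ω ⊂ ℝⁿ` be a bounded domain and `u ∈ L¹(Ω)`. For every
`ε > 0` and `γ > 0` there is `δ > 0` such that for every finite measurable partition
`𝒫 = (P_j)_{j=1}^m` of `Ω` into pairwise disjoint measurable sets of positive measure
with `ν(𝒫) = max_j diam (P_j) < δ`, the piecewise-average function
`u_𝒫 = ∑ j, χ_{P_j} ⨍_{P_j} u` satisfies `|{x ∈ Ω : |u_𝒫(x) - u(x)| > ε}| < γ`. -/
theorem measure_piecewiseAverage_dist_lt_of_partition_norm_small
    {n : ℕ} (Ω : Set (EuclideanSpace ℝ (Fin n)))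
    (hΩopen : IsOpen Ω) (hΩconn : IsConnected Ω) (hΩbdd : Bornology.IsBounded Ω)
    (u : EuclideanSpace ℝ (Fin n) → ℝ) (hu : IntegrableOn u Ω)
    (ε γ : ℝ) (hε : 0 < ε) (hγ : 0 < γ) :
    ∃ δ > 0, ∀ (m : ℕ) (P : Fin m → Set (EuclideanSpace ℝ (Fin n))),
      (∀ j, MeasurableSet (P j)) →
      (∀ j, 0 < volume (P j)) →
      Pairwise (Function.onFun Disjoint P) →
      (⋃ j, P j) = Ω →
      (∀ j, Metric.diam (P j) < δ) →
      volume {x ∈ Ω |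
          ε < |(∑ j, (P j).indicator (fun _ => ⨍ y in P j, u y) x) - u x|} <
        ENNReal.ofReal γ := by
  obtain ⟨δ, hδ, h⟩ := measure_piecewiseAverage_dist_lt_of_partition_norm_small_general
    hΩbdd.measure_lt_top.ne hu hε (ENNReal.ofReal_pos.2 hγ).ne'
  refine ⟨δ, hδ, fun m P hP _ hd hU hdiam ↦ ?_⟩
  simpa [piecewiseAverage] using h hP hd hU fun j ↦ (ENNReal.lt_ofReal_iff_toReal_lt
    (hΩbdd.subset (hU ▸ Set.subset_iUnion P j)).ediam_ne_top).2 (hdiam j)
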